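/- Let x and x̄ be two solutions of the system whose outputs coincide, i.e. C(t)x(t) = C(t)x̄(t) for all t ∈ [t0, τ], and let y denote this common output. Suppose there exist T ∈ (t0, τ] with Ψ(T) invertible, a constant ℓ ∈ (0, 1), and R ≥ max(‖x‖_{[t0,T]}, ‖x̄‖_{[t0,T]}) such that ‖F_T(·; d1) − F_T(·; d2)‖_{[t0,T]} ≤ ℓ ‖d1 − d2‖_{[t0,T]} for all continuous d1, d2 : [t0, T] → ℝⁿ with ‖d1‖_{[t0,T]} ≤ R and ‖d2‖_{[t0,T]} ≤ R. Then x(t) = x̄(t) for all t ∈ [t0, T]; in particular x(t0) = x̄(t0). -/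

import Mathlib

open MeasureTheory Matrix Set Filter Topology

noncomputable section

/-- `x` is a solution of `ẋ = A(t)x + g(t,x)` on `[t0, τ]` (integral form, componentwise). -/
def IsSolution (n : ℕ) (t0 τ : ℝ) (A : ℝ → Matrix (Fin n) (Fin n) ℝ)
    (g : ℝ → (Fin n → ℝ) → (Fin n → ℝ)) (x : ℝ → (Fin n → ℝ)) : Prop :=
  ContinuousOn x (Set.Icc t0 τ) ∧
    ∀ t ∈ Set.Icc t0 τ, ∀ i : Fin n,
      x t i = x t0 i + ∫ s in t0..t, ((A s).mulVec (x s) i + g s (x s) i)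

/-- `Φ` is the fundamental matrix of `ẋ = A(t)x` on `[t0, τ]`. -/
def IsFundamental (n : ℕ) (t0 τ : ℝ) (A : ℝ → Matrix (Fin n) (Fin n) ℝ)
    (Φ : ℝ → Matrix (Fin n) (Fin n) ℝ) : Prop :=
  (∀ i j : Fin n, ContinuousOn (fun t => Φ t i j) (Set.Icc t0 τ)) ∧
    ∀ t ∈ Set.Icc t0 τ, ∀ i j : Fin n,
      Φ t i j = (1 : Matrix (Fin n) (Fin n) ℝ) i j + ∫ s in t0..t, (A s * Φ s) i j

/-- `Ψ(t) = ∫_{t0}^t Φ(s)ᵀ C(s)ᵀ C(s) Φ(s) ds` (entrywise integral). -/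
def Psi (n k0 : ℕ) (t0 : ℝ) (C : ℝ → Matrix (Fin k0) (Fin n) ℝ)
    (Φ : ℝ → Matrix (Fin n) (Fin n) ℝ) (t : ℝ) : Matrix (Fin n) (Fin n) ℝ :=
  fun i j => ∫ s in t0..t, ((Φ s)ᵀ * (C s)ᵀ * C s * Φ s) i j

/-- `Ξ(t; z) = ∫_{t0}^t Φ(ρ)ᵀ C(ρ)ᵀ C(ρ) Φ(ρ) (∫_{t0}^ρ Φ(s)⁻¹ g(s, z(s)) ds) dρ`. -/
def Xi (n k0 : ℕ) (t0 : ℝ) (C : ℝ → Matrix (Fin k0) (Fin n) ℝ)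
    (Φ : ℝ → Matrix (Fin n) (Fin n) ℝ) (g : ℝ → (Fin n → ℝ) → (Fin n → ℝ))
    (z : ℝ → (Fin n → ℝ)) (t : ℝ) : Fin n → ℝ :=
  fun i => ∫ ρ in t0..t,
    ((Φ ρ)ᵀ * (C ρ)ᵀ * C ρ * Φ ρ).mulVec
      (fun i' => ∫ s in t0..ρ, ((Φ s)⁻¹).mulVec (g s (z s)) i') i

/-- The map `F_T(t; z)`. -/
def Fmap (n k0 : ℕ) (t0 : ℝ) (C : ℝ → Matrix (Fin k0) (Fin n) ℝ)
    (Φ : ℝ → Matrix (Fin n) (Fin n) ℝ) (g : ℝ → (Fin n → ℝ) → (Fin n → ℝ))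
    (y : ℝ → (Fin k0 → ℝ)) (T : ℝ) (z : ℝ → (Fin n → ℝ)) (t : ℝ) : Fin n → ℝ :=
  (Φ t).mulVec
      ((Psi n k0 t0 C Φ T)⁻¹.mulVec
        ((fun i => ∫ ρ in t0..T, ((Φ ρ)ᵀ * (C ρ)ᵀ).mulVec (y ρ) i)
          - Xi n k0 t0 C Φ g z T))
    + (Φ t).mulVec (fun i => ∫ ρ in t0..t, ((Φ ρ)⁻¹).mulVec (g ρ (z ρ)) i)

/-- supremum norm of `f` over `[a, b]`. -/
def supN (n : ℕ) (a b : ℝ) (f : ℝ → (Fin n → ℝ)) : ℝ :=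
  ⨆ t : Set.Icc a b, ‖f (t : ℝ)‖

/-- Regularity of the data `A`, `C`, `g` on `[t0, τ]`:  `A`, `C` measurable and bounded;
`g` measurable in `t`, continuous in `x`, bounded on bounded sets. -/
def RegularData (n k0 : ℕ) (t0 τ : ℝ) (A : ℝ → Matrix (Fin n) (Fin n) ℝ)
    (C : ℝ → Matrix (Fin k0) (Fin n) ℝ)
    (g : ℝ → (Fin n → ℝ) → (Fin n → ℝ)) : Prop :=
  (∀ i j, Measurable fun t => A t i j) ∧
  (∃ M : ℝ, ∀ t ∈ Set.Icc t0 τ, ∀ i j, |A t i j| ≤ M) ∧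
  (∀ i j, Measurable fun t => C t i j) ∧
  (∃ M : ℝ, ∀ t ∈ Set.Icc t0 τ, ∀ i j, |C t i j| ≤ M) ∧
  (∀ v : Fin n → ℝ, ∀ i, Measurable fun t => g t v i) ∧
  (∀ t ∈ Set.Icc t0 τ, Continuous (g t)) ∧
  (∀ R > (0:ℝ), ∃ M : ℝ, ∀ t ∈ Set.Icc t0 τ, ∀ v : Fin n → ℝ, ‖v‖ ≤ R → ‖g t v‖ ≤ M)

/-!
If `x` solves the system, then `u = Φ⁻¹ x` is absolutely continuous, because Cramer's rule writes
its entries as quotients of polynomials in the absolutely continuous entries of `Φ` and `x`.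
Differentiating `x = Φ u` almost everywhere gives `u' = Φ⁻¹ g(·, x)`, whose integral is therefore
`∫_{t0}^t Φ⁻¹ g(s, x) ds = u(t) - x(t0)`. Multiplying by the Gramian density `Φᵀ Cᵀ C Φ` and
integrating, `∫_{t0}^T Φᵀ Cᵀ y = Ψ(T) x(t0) + Ξ(T; x)`, so the output determines `x(t0)` up to the
term `Ξ(T; x)`, and `F_T(·; x) = x`. Two solutions with the same output are thus fixed points of the
same contraction.
-/

section AbsolutelyContinuous

variable {a b : ℝ}

theorem absolutelyContinuousOnInterval_of_eqOn {X : Type*} [PseudoMetricSpace X] {f h : ℝ → X}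
    (hf : AbsolutelyContinuousOnInterval f a b) (hfh : EqOn f h (uIcc a b)) :
    AbsolutelyContinuousOnInterval h a b := by
  refine Tendsto.congr' (eventually_inf_principal.2 (.of_forall fun E hE => ?_)) hf
  exact Finset.sum_congr rfl fun i hi => by rw [hfh (hE.1 i hi).1, hfh (hE.1 i hi).2]

theorem absolutelyContinuousOnInterval_const {X : Type*} [PseudoMetricSpace X] (c : X) :
    AbsolutelyContinuousOnInterval (fun _ => c) a b :=
  (LipschitzWith.const c).lipschitzOnWith.absolutelyContinuousOnInterval

theorem absolutelyContinuousOnInterval_finset_sum {ι F : Type*} [SeminormedAddCommGroup F]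
    {f : ι → ℝ → F} (s : Finset ι) (hf : ∀ i ∈ s, AbsolutelyContinuousOnInterval (f i) a b) :
    AbsolutelyContinuousOnInterval (fun t => ∑ i ∈ s, f i t) a b := by
  classical
  induction s using Finset.induction_on with
  | empty => simpa only [Finset.sum_empty] using absolutelyContinuousOnInterval_const 0
  | insert i s hi ih =>
    simp only [Finset.sum_insert hi]
    exact (hf i (s.mem_insert_self i)).fun_add
      (ih fun j hj => hf j (Finset.mem_insert_of_mem hj))

theorem absolutelyContinuousOnInterval_finset_prod {ι 𝕜 : Type*} [NormedField 𝕜]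
    {f : ι → ℝ → 𝕜} (s : Finset ι) (hf : ∀ i ∈ s, AbsolutelyContinuousOnInterval (f i) a b) :
    AbsolutelyContinuousOnInterval (fun t => ∏ i ∈ s, f i t) a b := by
  classical
  induction s using Finset.induction_on with
  | empty => simpa only [Finset.prod_empty] using absolutelyContinuousOnInterval_const 1
  | insert i s hi ih =>
    simp only [Finset.prod_insert hi]
    exact (hf i (s.mem_insert_self i)).fun_smul
      (ih fun j hj => hf j (Finset.mem_insert_of_mem hj))

theorem absolutelyContinuousOnInterval_comp_of_lipschitzOnWith {X Y : Type*}
    [PseudoMetricSpace X] [PseudoMetricSpace Y] {f : ℝ → X} {φ : X → Y} {K : NNReal}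
    (hφ : LipschitzOnWith K φ (f '' uIcc a b)) (hf : AbsolutelyContinuousOnInterval f a b) :
    AbsolutelyContinuousOnInterval (fun t => φ (f t)) a b := by
  have hlim : Tendsto (fun E : ℕ × (ℕ → ℝ × ℝ) =>
      (K : ℝ) * ∑ i ∈ Finset.range E.1, dist (f (E.2 i).1) (f (E.2 i).2))
      (AbsolutelyContinuousOnInterval.totalLengthFilter ⊓
        𝓟 (AbsolutelyContinuousOnInterval.disjWithin a b)) (𝓝 0) := by
    simpa only [mul_zero] using Tendsto.const_mul (K : ℝ) hf
  refine squeeze_zero' (.of_forall fun E => Finset.sum_nonneg fun i _ => dist_nonneg)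
    (eventually_inf_principal.2 (.of_forall fun E hE => ?_)) hlim
  rw [Finset.mul_sum]
  exact Finset.sum_le_sum fun i hi => hφ.dist_le_mul _ (mem_image_of_mem f (hE.1 i hi).1) _
    (mem_image_of_mem f (hE.1 i hi).2)

theorem lipschitzOnWith_inv₀ {𝕜 : Type*} [NormedField 𝕜] {s : Set 𝕜} {K : NNReal}
    (hs₀ : ∀ z ∈ s, z ≠ 0) (hs : ∀ z ∈ s, ‖z⁻¹‖₊ ≤ K) :
    LipschitzOnWith (K * K) (fun z : 𝕜 => z⁻¹) s := by
  refine LipschitzOnWith.of_dist_le_mul fun z hz w hw => ?_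
  rw [dist_inv_inv₀ (hs₀ z hz) (hs₀ w hw), div_eq_inv_mul, mul_inv, ← norm_inv, ← norm_inv]
  push_cast
  gcongr
  · exact hs z hz
  · exact hs w hw

theorem absolutelyContinuousOnInterval_inv₀ {𝕜 : Type*} [NormedField 𝕜] {f : ℝ → 𝕜}
    (hf : AbsolutelyContinuousOnInterval f a b) (hf₀ : ∀ t ∈ uIcc a b, f t ≠ 0) :
    AbsolutelyContinuousOnInterval (fun t => (f t)⁻¹) a b := by
  obtain ⟨M, hM⟩ := isCompact_uIcc.exists_bound_of_continuousOn (hf.continuousOn.inv₀ hf₀)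
  refine absolutelyContinuousOnInterval_comp_of_lipschitzOnWith
    (lipschitzOnWith_inv₀ (K := M.toNNReal) ?_ ?_) hf
  · exact forall_mem_image.2 hf₀
  · exact forall_mem_image.2 fun t ht => NNReal.le_toNNReal_of_coe_le (hM t ht)

variable {ι 𝕜 : Type*} [Fintype ι] [DecidableEq ι] [NormedField 𝕜] {M : ℝ → Matrix ι ι 𝕜}

theorem absolutelyContinuousOnInterval_det
    (hM : ∀ i j, AbsolutelyContinuousOnInterval (fun t => M t i j) a b) :
    AbsolutelyContinuousOnInterval (fun t => (M t).det) a b := by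
  simp only [Matrix.det_apply', ← smul_eq_mul]
  refine absolutelyContinuousOnInterval_finset_sum Finset.univ fun σ _ => ?_
  exact (absolutelyContinuousOnInterval_finset_prod Finset.univ fun i _ => hM (σ i) i).const_smul
    ((Equiv.Perm.sign σ : ℤ) : 𝕜)

theorem absolutelyContinuousOnInterval_inv_mulVec {v : ℝ → ι → 𝕜}
    (hM : ∀ i j, AbsolutelyContinuousOnInterval (fun t => M t i j) a b)
    (hv : ∀ i, AbsolutelyContinuousOnInterval (fun t => v t i) a b)
    (hMu : ∀ t ∈ uIcc a b, IsUnit (M t)) (i : ι) :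
    AbsolutelyContinuousOnInterval (fun t => ((M t)⁻¹ *ᵥ v t) i) a b := by
  have hdet₀ : ∀ t ∈ uIcc a b, (M t).det ≠ 0 := fun t ht =>
    ((Matrix.isUnit_iff_isUnit_det _).1 (hMu t ht)).ne_zero
  have hcramer : AbsolutelyContinuousOnInterval (fun t => (M t).cramer (v t) i) a b := by
    simp only [Matrix.cramer_apply]
    refine absolutelyContinuousOnInterval_det fun k j => ?_
    rcases eq_or_ne j i with rfl | hj
    · simpa only [Matrix.updateCol_self] using hv k
    · simpa only [Matrix.updateCol_ne hj] using hM k j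
  refine absolutelyContinuousOnInterval_of_eqOn
    ((absolutelyContinuousOnInterval_inv₀ (absolutelyContinuousOnInterval_det hM) hdet₀).fun_smul
      hcramer) fun t ht => ?_
  rw [← Matrix.det_smul_inv_mulVec_eq_cramer _ _ (hdet₀ t ht).isUnit, Pi.smul_apply,
    inv_smul_smul₀ (hdet₀ t ht)]

end AbsolutelyContinuous

section Primitive

variable {a b : ℝ}

theorem absolutelyContinuousOnInterval_of_eq_add_integral {f f' : ℝ → ℝ} {c : ℝ} (hab : a ≤ b)
    (hf' : IntervalIntegrable f' volume a b)
    (hf : ∀ t ∈ Icc a b, f t = c + ∫ s in a..t, f' s) :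
    AbsolutelyContinuousOnInterval f a b := by
  refine absolutelyContinuousOnInterval_of_eqOn ((absolutelyContinuousOnInterval_const c).fun_add
    (hf'.absolutelyContinuousOnInterval_intervalIntegral left_mem_uIcc)) fun t ht => ?_
  rw [uIcc_of_le hab] at ht
  exact (hf t ht).symm

theorem ae_hasDerivAt_of_eq_add_integral {E : Type*} [NormedAddCommGroup E] [NormedSpace ℝ E]
    [CompleteSpace E] {f f' : ℝ → E} {c : E} (hf' : IntervalIntegrable f' volume a b)
    (hf : ∀ t ∈ Icc a b, f t = c + ∫ s in a..t, f' s) :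
    ∀ᵐ t, t ∈ Ioo a b → HasDerivAt f (f' t) t := by
  filter_upwards [hf'.ae_hasDerivAt_integral] with t hderiv ht
  refine ((hderiv (Icc_subset_uIcc (Ioo_subset_Icc_self ht)) a left_mem_uIcc).const_add
    c).congr_of_eventuallyEq ?_
  filter_upwards [Icc_mem_nhds ht.1 ht.2] with s hs using hf s hs

theorem integral_eq_sub_of_ae_hasDerivAt {f f' : ℝ → ℝ} (hab : a ≤ b)
    (hf : AbsolutelyContinuousOnInterval f a b)
    (hderiv : ∀ᵐ t, t ∈ Ioo a b → HasDerivAt f (f' t) t) :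
    ∫ t in a..b, f' t = f b - f a := by
  rw [← hf.integral_deriv_eq_sub]
  refine intervalIntegral.integral_congr_ae ?_
  filter_upwards [hderiv, compl_mem_ae_iff.2 (measure_singleton b)] with t ht htb htab
  rw [uIoc_of_le hab] at htab
  exact (ht ⟨htab.1, lt_of_le_of_ne htab.2 htb⟩).deriv.symm

end Primitive

section VariationOfConstants

theorem hasDerivAt_mulVec_apply {m ι 𝕜 : Type*} [Fintype ι] [NontriviallyNormedField 𝕜]
    {M : 𝕜 → Matrix m ι 𝕜} {M' : Matrix m ι 𝕜} {v : 𝕜 → ι → 𝕜} {v' : ι → 𝕜} {t : 𝕜} {i : m}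
    (hM : ∀ j, HasDerivAt (fun s => M s i j) (M' i j) t)
    (hv : ∀ j, HasDerivAt (fun s => v s j) (v' j) t) :
    HasDerivAt (fun s => (M s *ᵥ v s) i) ((M' *ᵥ v t + M t *ᵥ v') i) t := by
  simp only [Pi.add_apply, Matrix.mulVec, dotProduct, ← Finset.sum_add_distrib]
  exact HasDerivAt.fun_sum fun j _ => (hM j).mul (hv j)

variable {ι : Type*} [Fintype ι] [DecidableEq ι]

theorem hasDerivAt_inv_mulVec_apply {Φ : ℝ → Matrix ι ι ℝ} {A : Matrix ι ι ℝ} {x : ℝ → ι → ℝ}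
    {f : ι → ℝ} {t : ℝ} (hΦu : ∀ᶠ s in 𝓝 t, IsUnit (Φ s))
    (hΦ : ∀ i j, HasDerivAt (fun s => Φ s i j) ((A * Φ t) i j) t)
    (hx : ∀ i, HasDerivAt (fun s => x s i) ((A *ᵥ x t + f) i) t)
    (hdiff : ∀ i, DifferentiableAt ℝ (fun s => ((Φ s)⁻¹ *ᵥ x s) i) t) (i : ι) :
    HasDerivAt (fun s => ((Φ s)⁻¹ *ᵥ x s) i) (((Φ t)⁻¹ *ᵥ f) i) t := by
  set u : ℝ → ι → ℝ := fun s => (Φ s)⁻¹ *ᵥ x s with hu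
  set u' : ι → ℝ := fun j => deriv (fun s => u s j) t
  have hu_deriv : ∀ j, HasDerivAt (fun s => u s j) (u' j) t := fun j => (hdiff j).hasDerivAt
  have hΦ_mulVec_u : ∀ᶠ s in 𝓝 t, Φ s *ᵥ u s = x s := by
    filter_upwards [hΦu] with s hs
    rw [hu, Matrix.mulVec_mulVec, Matrix.mul_nonsing_inv _ ((Φ s).isUnit_iff_isUnit_det.1 hs),
      Matrix.one_mulVec]
  -- Differentiating `x = Φ u` in two ways gives `A x + f = A Φ u + Φ u'`.
  have hx_deriv : A *ᵥ x t + f = (A * Φ t) *ᵥ u t + Φ t *ᵥ u' := funext fun k =>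
    (hx k).unique <| (hasDerivAt_mulVec_apply (fun j => hΦ k j) hu_deriv).congr_of_eventuallyEq <|
      hΦ_mulVec_u.mono fun s hs => congrFun hs.symm k
  have hf : f = Φ t *ᵥ u' := by
    rwa [← Matrix.mulVec_mulVec, hΦ_mulVec_u.self_of_nhds, add_right_inj] at hx_deriv
  rw [hf, Matrix.mulVec_mulVec,
    Matrix.nonsing_inv_mul _ ((Φ t).isUnit_iff_isUnit_det.1 hΦu.self_of_nhds), Matrix.one_mulVec]
  exact hu_deriv i

variable {a b : ℝ} {Φ A : ℝ → Matrix ι ι ℝ} {x f : ℝ → ι → ℝ} {Φ₀ : Matrix ι ι ℝ} {x₀ : ι → ℝ}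

theorem integral_inv_mulVec_eq_sub (hab : a ≤ b)
    (hAΦ : ∀ i j, IntervalIntegrable (fun s => (A s * Φ s) i j) volume a b)
    (hAxf : ∀ i, IntervalIntegrable (fun s => (A s *ᵥ x s + f s) i) volume a b)
    (hΦ : ∀ t ∈ Icc a b, ∀ i j, Φ t i j = Φ₀ i j + ∫ s in a..t, (A s * Φ s) i j)
    (hx : ∀ t ∈ Icc a b, ∀ i, x t i = x₀ i + ∫ s in a..t, (A s *ᵥ x s + f s) i)
    (hΦu : ∀ t ∈ Icc a b, IsUnit (Φ t)) (i : ι) :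
    ∫ s in a..b, ((Φ s)⁻¹ *ᵥ f s) i = ((Φ b)⁻¹ *ᵥ x b) i - ((Φ a)⁻¹ *ᵥ x a) i := by
  have hu_ac : ∀ i, AbsolutelyContinuousOnInterval (fun s => ((Φ s)⁻¹ *ᵥ x s) i) a b :=
    absolutelyContinuousOnInterval_inv_mulVec
      (fun i j => absolutelyContinuousOnInterval_of_eq_add_integral hab (hAΦ i j)
        fun t ht => hΦ t ht i j)
      (fun i => absolutelyContinuousOnInterval_of_eq_add_integral hab (hAxf i)
        fun t ht => hx t ht i)
      (by rwa [uIcc_of_le hab])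
  have hΦ_deriv := ae_all_iff.2 fun i => ae_all_iff.2 fun j =>
    ae_hasDerivAt_of_eq_add_integral (hAΦ i j) fun t ht => hΦ t ht i j
  have hx_deriv := ae_all_iff.2 fun i =>
    ae_hasDerivAt_of_eq_add_integral (hAxf i) fun t ht => hx t ht i
  have hu_diff := ae_all_iff.2 fun i => (hu_ac i).ae_differentiableAt
  refine integral_eq_sub_of_ae_hasDerivAt hab (hu_ac i) ?_
  filter_upwards [hΦ_deriv, hx_deriv, hu_diff] with t hΦt hxt hut ht
  refine hasDerivAt_inv_mulVec_apply ?_ (fun i j => hΦt i j ht) (fun i => hxt i ht)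
    (fun i => hut i (Icc_subset_uIcc (Ioo_subset_Icc_self ht))) i
  filter_upwards [Icc_mem_nhds ht.1 ht.2] with s hs using hΦu s hs

end VariationOfConstants

section Integrability

theorem intervalIntegrable_of_norm_le {E : Type*} [NormedAddCommGroup E] {a b M : ℝ}
    (hab : a ≤ b) {f : ℝ → E} (hf : AEStronglyMeasurable f (volume.restrict (Icc a b)))
    (hM : ∀ t ∈ Icc a b, ‖f t‖ ≤ M) : IntervalIntegrable f volume a b := by
  rw [intervalIntegrable_iff_integrableOn_Icc_of_le hab]
  exact .of_bound measure_Icc_lt_top hf M (ae_restrict_of_forall_mem measurableSet_Icc hM)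

theorem aestronglyMeasurable_apply_of_continuous_of_measurable {α X E : Type*}
    [MeasurableSpace α] {μ : Measure α} [TopologicalSpace X]
    [TopologicalSpace.MetrizableSpace X] [SecondCountableTopology X] [MeasurableSpace X]
    [OpensMeasurableSpace X]
    [NormedAddCommGroup E] [SecondCountableTopology E] [MeasurableSpace E] [BorelSpace E]
    {S : Set α} (hS : MeasurableSet S) {g : α → X → E} (hg_meas : ∀ v, Measurable fun t => g t v)
    (hg_cont : ∀ t ∈ S, Continuous (g t)) {x : α → X} (hx : AEMeasurable x (μ.restrict S)) :
    AEStronglyMeasurable (fun t => g t (x t)) (μ.restrict S) := by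
  set u : X → α → E := fun v => S.indicator fun t => g t v with hu
  have hu_cont : ∀ t, Continuous fun v => u v t := fun t => by
    by_cases ht : t ∈ S
    · simpa only [hu, indicator_of_mem ht] using hg_cont t ht
    · simpa only [hu, indicator_of_notMem ht] using continuous_const
  have hu_meas : Measurable (Function.uncurry u) :=
    measurable_uncurry_of_continuous_of_measurable hu_cont fun v => (hg_meas v).indicator hS
  refine (hu_meas.comp_aemeasurable (hx.prodMk aemeasurable_id)).aestronglyMeasurable.congr ?_
  filter_upwards [ae_restrict_mem hS] with t ht
  exact indicator_of_mem ht fun t => g t (x t)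

variable {l m p 𝕜 : Type*} [Fintype m] [NormedRing 𝕜] {a b : ℝ}

theorem intervalIntegrable_mulVec_apply {M : ℝ → Matrix l m 𝕜} {v : ℝ → m → 𝕜}
    (hM : ∀ i j, IntervalIntegrable (fun t => M t i j) volume a b)
    (hv : ContinuousOn v (uIcc a b)) (i : l) :
    IntervalIntegrable (fun t => (M t *ᵥ v t) i) volume a b := by
  simpa only [Matrix.mulVec, dotProduct, Finset.sum_fn] using
    IntervalIntegrable.sum Finset.univ fun k _ =>
      (hM i k).mul_continuousOn (continuousOn_pi.1 hv k)

theorem intervalIntegrable_mul_apply_of_continuousOn_right {M : ℝ → Matrix l m 𝕜}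
    {N : ℝ → Matrix m p 𝕜} (hM : ∀ i j, IntervalIntegrable (fun t => M t i j) volume a b)
    (hN : ∀ i j, ContinuousOn (fun t => N t i j) (uIcc a b)) (i : l) (j : p) :
    IntervalIntegrable (fun t => (M t * N t) i j) volume a b :=
  intervalIntegrable_mulVec_apply hM (continuousOn_pi.2 fun k => hN k j) i

theorem intervalIntegrable_mul_apply_of_continuousOn_left {M : ℝ → Matrix l m 𝕜}
    {N : ℝ → Matrix m p 𝕜} (hM : ∀ i j, ContinuousOn (fun t => M t i j) (uIcc a b))
    (hN : ∀ i j, IntervalIntegrable (fun t => N t i j) volume a b) (i : l) (j : p) :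
    IntervalIntegrable (fun t => (M t * N t) i j) volume a b := by
  simpa only [Matrix.mul_apply, Finset.sum_fn] using
    IntervalIntegrable.sum Finset.univ fun k _ => (hN k j).continuousOn_mul (hM i k)

end Integrability

theorem continuousOn_matrix_inv {X ι 𝕜 : Type*} [TopologicalSpace X] [Fintype ι] [DecidableEq ι]
    [NormedField 𝕜] {M : X → Matrix ι ι 𝕜} {s : Set X} (hM : ContinuousOn M s)
    (hMu : ∀ t ∈ s, IsUnit (M t)) : ContinuousOn (fun t => (M t)⁻¹) s := by
  refine fun t ht => (continuousAt_matrix_inv (M t) ?_).comp_continuousWithinAt (hM t ht)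
  rw [Ring.inverse_eq_inv']
  exact continuousAt_inv₀ ((M t).isUnit_iff_isUnit_det.1 (hMu t ht)).ne_zero

theorem integral_mulVec_const {m ι 𝕜 : Type*} [Fintype ι] [RCLike 𝕜] {M : ℝ → Matrix m ι 𝕜}
    {a b : ℝ} (hM : ∀ i j, IntervalIntegrable (fun t => M t i j) volume a b) (v : ι → 𝕜) :
    (Matrix.of fun i j => ∫ t in a..b, M t i j) *ᵥ v = fun i => ∫ t in a..b, (M t *ᵥ v) i := by
  ext i
  simp only [Matrix.mulVec, dotProduct, Matrix.of_apply]
  rw [intervalIntegral.integral_finsetSum fun j _ => (hM i j).mul_const (v j)]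
  simp only [intervalIntegral.integral_mul_const]

section SupN

variable {n : ℕ} {a b : ℝ} {f h : ℝ → Fin n → ℝ}

theorem norm_le_supN (hf : ContinuousOn f (Icc a b)) {t : ℝ} (ht : t ∈ Icc a b) :
    ‖f t‖ ≤ supN n a b f := by
  obtain ⟨M, hM⟩ := isCompact_Icc.exists_bound_of_continuousOn hf
  exact le_ciSup (f := fun s : Icc a b => ‖f s‖) ⟨M, forall_mem_range.2 fun s => hM s s.2⟩ ⟨t, ht⟩

theorem supN_congr (hfh : EqOn f h (Icc a b)) : supN n a b f = supN n a b h :=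
  iSup_congr fun t => by rw [hfh t.2]

theorem eqOn_zero_of_supN_le_mul {ℓ : ℝ} (hℓ : ℓ < 1) (hf : ContinuousOn f (Icc a b))
    (hle : supN n a b f ≤ ℓ * supN n a b f) : EqOn f 0 (Icc a b) := by
  intro t ht
  have hsup : supN n a b f ≤ 0 := by nlinarith
  exact norm_le_zero_iff.1 ((norm_le_supN hf ht).trans hsup)

end SupN

section System

variable {n k0 : ℕ} {t0 τ : ℝ} {A : ℝ → Matrix (Fin n) (Fin n) ℝ}
  {C : ℝ → Matrix (Fin k0) (Fin n) ℝ} {g : ℝ → (Fin n → ℝ) → (Fin n → ℝ)}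

namespace RegularData

theorem intervalIntegrable_apply (hreg : RegularData n k0 t0 τ A C g) (hτ : t0 ≤ τ)
    (i j : Fin n) : IntervalIntegrable (fun t => A t i j) volume t0 τ := by
  obtain ⟨hA, ⟨M, hM⟩, -⟩ := hreg
  exact intervalIntegrable_of_norm_le hτ (hA i j).aestronglyMeasurable fun t ht => hM t ht i j

theorem intervalIntegrable_transpose_mul_self (hreg : RegularData n k0 t0 τ A C g) (hτ : t0 ≤ τ)
    (i j : Fin n) : IntervalIntegrable (fun t => ((C t)ᵀ * C t) i j) volume t0 τ := by
  obtain ⟨-, -, hC, ⟨M, hM⟩, -⟩ := hreg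
  simp only [Matrix.mul_apply, Matrix.transpose_apply]
  refine intervalIntegrable_of_norm_le (M := ∑ _l : Fin k0, M * M) hτ
    (Finset.measurable_fun_sum _ fun l _ => (hC l i).mul (hC l j)).aestronglyMeasurable
    fun t ht => norm_sum_le_of_le _ fun l _ => ?_
  rw [norm_mul]
  exact mul_le_mul (hM t ht l i) (hM t ht l j) (norm_nonneg _)
    ((abs_nonneg _).trans (hM t ht l i))

theorem intervalIntegrable_nonlinearity (hreg : RegularData n k0 t0 τ A C g) (hτ : t0 ≤ τ)
    {x : ℝ → Fin n → ℝ} (hx : ContinuousOn x (Icc t0 τ)) (i : Fin n) :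
    IntervalIntegrable (fun t => g t (x t) i) volume t0 τ := by
  obtain ⟨-, -, -, -, hg_meas, hg_cont, hg_bdd⟩ := hreg
  obtain ⟨R, hR⟩ := isCompact_Icc.exists_bound_of_continuousOn hx
  obtain ⟨M, hM⟩ := hg_bdd (max R 1) (by positivity)
  refine intervalIntegrable_of_norm_le (M := M) hτ
    (aestronglyMeasurable_apply_of_continuous_of_measurable (g := fun t v => g t v i)
      measurableSet_Icc (fun v => hg_meas v i)
      (fun t ht => (continuous_apply i).comp (hg_cont t ht)) (hx.aemeasurable measurableSet_Icc))
    fun t ht => ?_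
  exact (norm_le_pi_norm (g t (x t)) i).trans (hM t ht _ ((hR t ht).trans (le_max_left R 1)))

end RegularData

variable {Φ : ℝ → Matrix (Fin n) (Fin n) ℝ}

namespace IsFundamental

theorem apply_left (hΦ : IsFundamental n t0 τ A Φ) (hτ : t0 ≤ τ) : Φ t0 = 1 := by
  ext i j
  rw [hΦ.2 t0 (left_mem_Icc.2 hτ), intervalIntegral.integral_same, add_zero]

theorem continuousOn (hΦ : IsFundamental n t0 τ A Φ) : ContinuousOn Φ (Icc t0 τ) :=
  continuousOn_pi.2 fun i => continuousOn_pi.2 fun j => hΦ.1 i j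

theorem intervalIntegrable_gramian (hΦ : IsFundamental n t0 τ A Φ) (hτ : t0 ≤ τ)
    (hC : ∀ i j, IntervalIntegrable (fun t => ((C t)ᵀ * C t) i j) volume t0 τ) (i j : Fin n) :
    IntervalIntegrable (fun t => ((Φ t)ᵀ * (C t)ᵀ * C t * Φ t) i j) volume t0 τ := by
  have hΦc : ∀ i j, ContinuousOn (fun t => Φ t i j) (uIcc t0 τ) := by
    rw [uIcc_of_le hτ]
    exact hΦ.1
  simp only [Matrix.mul_assoc (Φ _)ᵀ (C _)ᵀ]
  exact intervalIntegrable_mul_apply_of_continuousOn_right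
    (intervalIntegrable_mul_apply_of_continuousOn_left (M := fun t => (Φ t)ᵀ)
      (fun i j => hΦc j i) hC) hΦc i j

end IsFundamental

variable {T t : ℝ} {x : ℝ → Fin n → ℝ} {y : ℝ → Fin k0 → ℝ}

namespace IsSolution

theorem integral_inv_mulVec (hx : IsSolution n t0 τ A g x)
    (hA : ∀ i j, IntervalIntegrable (fun t => A t i j) volume t0 τ)
    (hgx : ∀ i, IntervalIntegrable (fun t => g t (x t) i) volume t0 τ)
    (hΦ : IsFundamental n t0 τ A Φ) (hΦu : ∀ t ∈ Icc t0 τ, IsUnit (Φ t)) (ht : t ∈ Icc t0 τ) :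
    (fun i => ∫ s in t0..t, ((Φ s)⁻¹ *ᵥ g s (x s)) i) = (Φ t)⁻¹ *ᵥ x t - x t0 := by
  have hsub : Icc t0 t ⊆ Icc t0 τ := Icc_subset_Icc_right ht.2
  have husub : uIcc t0 t ⊆ uIcc t0 τ := by
    rwa [uIcc_of_le ht.1, uIcc_of_le (ht.1.trans ht.2)]
  have hA_t := fun i j => (hA i j).mono_set husub
  have hAΦ := intervalIntegrable_mul_apply_of_continuousOn_right hA_t fun i j => by
    rw [uIcc_of_le ht.1]
    exact (hΦ.1 i j).mono hsub
  have hAx := intervalIntegrable_mulVec_apply hA_t (v := x) (by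
    rw [uIcc_of_le ht.1]
    exact hx.1.mono hsub)
  ext i
  rw [integral_inv_mulVec_eq_sub ht.1 hAΦ (fun i => (hAx i).add ((hgx i).mono_set husub))
    (fun s hs => hΦ.2 s (hsub hs)) (fun s hs => hx.2 s (hsub hs)) (fun s hs => hΦu s (hsub hs)),
    hΦ.apply_left (ht.1.trans ht.2), inv_one, Matrix.one_mulVec, Pi.sub_apply]

theorem Xi_eq (hx : IsSolution n t0 τ A g x)
    (hA : ∀ i j, IntervalIntegrable (fun t => A t i j) volume t0 τ)
    (hgx : ∀ i, IntervalIntegrable (fun t => g t (x t) i) volume t0 τ)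
    (hΦ : IsFundamental n t0 τ A Φ) (hΦu : ∀ t ∈ Icc t0 τ, IsUnit (Φ t)) (hT : T ∈ Icc t0 τ) :
    Xi n k0 t0 C Φ g x T = fun i => ∫ ρ in t0..T,
      (((Φ ρ)ᵀ * (C ρ)ᵀ * C ρ * Φ ρ) *ᵥ ((Φ ρ)⁻¹ *ᵥ x ρ - x t0)) i :=
  funext fun i => intervalIntegral.integral_congr fun ρ hρ => by
    rw [uIcc_of_le hT.1] at hρ
    simp only [hx.integral_inv_mulVec hA hgx hΦ hΦu (Icc_subset_Icc_right hT.2 hρ)]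

theorem integral_output_eq (hx : IsSolution n t0 τ A g x)
    (hA : ∀ i j, IntervalIntegrable (fun t => A t i j) volume t0 τ)
    (hC : ∀ i j, IntervalIntegrable (fun t => ((C t)ᵀ * C t) i j) volume t0 τ)
    (hgx : ∀ i, IntervalIntegrable (fun t => g t (x t) i) volume t0 τ)
    (hΦ : IsFundamental n t0 τ A Φ) (hΦu : ∀ t ∈ Icc t0 τ, IsUnit (Φ t)) (hT : T ∈ Icc t0 τ)
    (hy : ∀ t ∈ Icc t0 T, y t = C t *ᵥ x t) :
    (fun i => ∫ ρ in t0..T, (((Φ ρ)ᵀ * (C ρ)ᵀ) *ᵥ y ρ) i)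
      = Psi n k0 t0 C Φ T *ᵥ x t0 + Xi n k0 t0 C Φ g x T := by
  set G : ℝ → Matrix (Fin n) (Fin n) ℝ := fun ρ => (Φ ρ)ᵀ * (C ρ)ᵀ * C ρ * Φ ρ with hG
  set u : ℝ → Fin n → ℝ := fun ρ => (Φ ρ)⁻¹ *ᵥ x ρ with hu
  have huIcc : uIcc t0 T = Icc t0 T := uIcc_of_le hT.1
  have hsub : Icc t0 T ⊆ Icc t0 τ := Icc_subset_Icc_right hT.2
  have hG_int : ∀ i j, IntervalIntegrable (fun ρ => G ρ i j) volume t0 T := fun i j =>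
    (hΦ.intervalIntegrable_gramian (hT.1.trans hT.2) hC i j).mono_set (by
      rwa [huIcc, uIcc_of_le (hT.1.trans hT.2)])
  have hu_cont : ContinuousOn u (uIcc t0 T) := by
    rw [huIcc]
    exact (continuous_fst.matrix_mulVec continuous_snd).comp_continuousOn
      (((continuousOn_matrix_inv hΦ.continuousOn hΦu).prodMk hx.1).mono hsub)
  have hΨ : Psi n k0 t0 C Φ T *ᵥ x t0 = fun i => ∫ ρ in t0..T, (G ρ *ᵥ x t0) i :=
    integral_mulVec_const hG_int (x t0)
  have hy_eq : ∀ ρ ∈ Icc t0 T, ((Φ ρ)ᵀ * (C ρ)ᵀ) *ᵥ y ρ = G ρ *ᵥ u ρ := fun ρ hρ => by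
    simp only [hG, hu]
    rw [Matrix.mulVec_mulVec, Matrix.mul_assoc _ (Φ ρ),
      Matrix.mul_nonsing_inv _ ((Φ ρ).isUnit_iff_isUnit_det.1 (hΦu ρ (hsub hρ))),
      Matrix.mul_one, hy ρ hρ, Matrix.mulVec_mulVec]
  ext i
  rw [hΨ, hx.Xi_eq hA hgx hΦ hΦu hT, Pi.add_apply, ← intervalIntegral.integral_add
    (intervalIntegrable_mulVec_apply hG_int continuousOn_const i)
    (intervalIntegrable_mulVec_apply (v := fun ρ => u ρ - x t0) hG_int
      (hu_cont.sub continuousOn_const) i)]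
  refine intervalIntegral.integral_congr fun ρ hρ => ?_
  simp only [hy_eq ρ (huIcc ▸ hρ), ← Pi.add_apply, ← Matrix.mulVec_add, add_sub_cancel]

theorem Fmap_eq (hx : IsSolution n t0 τ A g x)
    (hA : ∀ i j, IntervalIntegrable (fun t => A t i j) volume t0 τ)
    (hC : ∀ i j, IntervalIntegrable (fun t => ((C t)ᵀ * C t) i j) volume t0 τ)
    (hgx : ∀ i, IntervalIntegrable (fun t => g t (x t) i) volume t0 τ)
    (hΦ : IsFundamental n t0 τ A Φ) (hΦu : ∀ t ∈ Icc t0 τ, IsUnit (Φ t)) (hT : T ∈ Icc t0 τ)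
    (hy : ∀ t ∈ Icc t0 T, y t = C t *ᵥ x t) (hΨ : IsUnit (Psi n k0 t0 C Φ T))
    (ht : t ∈ Icc t0 T) : Fmap n k0 t0 C Φ g y T x t = x t := by
  have htτ : t ∈ Icc t0 τ := Icc_subset_Icc_right hT.2 ht
  rw [Fmap, hx.integral_output_eq hA hC hgx hΦ hΦu hT hy, add_sub_cancel_right,
    Matrix.mulVec_mulVec _ (Psi n k0 t0 C Φ T)⁻¹,
    Matrix.nonsing_inv_mul _ ((Matrix.isUnit_iff_isUnit_det _).1 hΨ), Matrix.one_mulVec,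
    hx.integral_inv_mulVec hA hgx hΦ hΦu htτ, ← Matrix.mulVec_add, add_sub_cancel,
    Matrix.mulVec_mulVec, Matrix.mul_nonsing_inv _ ((Φ t).isUnit_iff_isUnit_det.1 (hΦu t htτ)),
    Matrix.one_mulVec]

end IsSolution

theorem stmt1_general {ℓ : ℝ} {xb : ℝ → Fin n → ℝ}
    (hA : ∀ i j, IntervalIntegrable (fun t => A t i j) volume t0 τ)
    (hC : ∀ i j, IntervalIntegrable (fun t => ((C t)ᵀ * C t) i j) volume t0 τ)
    (hgx : ∀ i, IntervalIntegrable (fun t => g t (x t) i) volume t0 τ)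
    (hgxb : ∀ i, IntervalIntegrable (fun t => g t (xb t) i) volume t0 τ)
    (hΦ : IsFundamental n t0 τ A Φ) (hΦu : ∀ t ∈ Icc t0 τ, IsUnit (Φ t))
    (hx : IsSolution n t0 τ A g x) (hxb : IsSolution n t0 τ A g xb) (hT : T ∈ Icc t0 τ)
    (hyx : ∀ t ∈ Icc t0 T, y t = C t *ᵥ x t) (hyxb : ∀ t ∈ Icc t0 T, y t = C t *ᵥ xb t)
    (hΨ : IsUnit (Psi n k0 t0 C Φ T)) (hℓ : ℓ < 1)
    (hcontr : supN n t0 T (fun t => Fmap n k0 t0 C Φ g y T x t - Fmap n k0 t0 C Φ g y T xb t)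
      ≤ ℓ * supN n t0 T (fun t => x t - xb t)) :
    ∀ t ∈ Icc t0 T, x t = xb t := by
  have hsub : Icc t0 T ⊆ Icc t0 τ := Icc_subset_Icc_right hT.2
  have hF : EqOn (fun t => Fmap n k0 t0 C Φ g y T x t - Fmap n k0 t0 C Φ g y T xb t)
      (fun t => x t - xb t) (Icc t0 T) := fun t ht => by
    simp only [hx.Fmap_eq hA hC hgx hΦ hΦu hT hyx hΨ ht,
      hxb.Fmap_eq hA hC hgxb hΦ hΦu hT hyxb hΨ ht]
  rw [supN_congr hF] at hcontr
  exact fun t ht => sub_eq_zero.1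
    (eqOn_zero_of_supN_le_mul hℓ ((hx.1.mono hsub).sub (hxb.1.mono hsub)) hcontr ht)

end System

theorem stmt1 (n k0 : ℕ) (hn : 1 ≤ n) (hk0 : 1 ≤ k0) (t0 τ : ℝ) (ht : t0 < τ)
    (A : ℝ → Matrix (Fin n) (Fin n) ℝ) (C : ℝ → Matrix (Fin k0) (Fin n) ℝ)
    (g : ℝ → (Fin n → ℝ) → (Fin n → ℝ))
    (hreg : RegularData n k0 t0 τ A C g)
    (Φ : ℝ → Matrix (Fin n) (Fin n) ℝ) (hΦ : IsFundamental n t0 τ A Φ)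
    (hΦinv : ∀ t ∈ Set.Icc t0 τ, IsUnit (Φ t))
    (x xb : ℝ → (Fin n → ℝ))
    (hx : IsSolution n t0 τ A g x) (hxb : IsSolution n t0 τ A g xb)
    (houtput : ∀ t ∈ Set.Icc t0 τ, (C t).mulVec (x t) = (C t).mulVec (xb t))
    (y : ℝ → (Fin k0 → ℝ)) (hy : ∀ t ∈ Set.Icc t0 τ, y t = (C t).mulVec (x t))
    (T : ℝ) (hT : T ∈ Set.Ioc t0 τ) (hΨT : IsUnit (Psi n k0 t0 C Φ T))
    (ℓ : ℝ) (hℓ : ℓ ∈ Set.Ioo (0:ℝ) 1)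
    (R : ℝ) (hR : max (supN n t0 T x) (supN n t0 T xb) ≤ R)
    (hcontr : ∀ d1 d2 : ℝ → (Fin n → ℝ),
      ContinuousOn d1 (Set.Icc t0 T) → ContinuousOn d2 (Set.Icc t0 T) →
      supN n t0 T d1 ≤ R → supN n t0 T d2 ≤ R →
      supN n t0 T (fun t => Fmap n k0 t0 C Φ g y T d1 t - Fmap n k0 t0 C Φ g y T d2 t)
        ≤ ℓ * supN n t0 T (fun t => d1 t - d2 t)) :
    (∀ t ∈ Set.Icc t0 T, x t = xb t) ∧ x t0 = xb t0 := by
  have hsub : Icc t0 T ⊆ Icc t0 τ := Icc_subset_Icc_right hT.2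
  have hx_eq : ∀ t ∈ Icc t0 T, x t = xb t := stmt1_general
    (hreg.intervalIntegrable_apply ht.le) (hreg.intervalIntegrable_transpose_mul_self ht.le)
    (hreg.intervalIntegrable_nonlinearity ht.le hx.1)
    (hreg.intervalIntegrable_nonlinearity ht.le hxb.1) hΦ hΦinv hx hxb ⟨hT.1.le, hT.2⟩
    (fun t h => hy t (hsub h)) (fun t h => (hy t (hsub h)).trans (houtput t (hsub h))) hΨT hℓ.2
    (hcontr x xb (hx.1.mono hsub) (hxb.1.mono hsub) (le_of_max_le_left hR)
      (le_of_max_le_right hR))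
  exact ⟨hx_eq, hx_eq t0 (left_mem_Icc.2 hT.1.le)⟩
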